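/- arXiv:2210.01639 — 5 statements merged into one kernel-verified Lean document; each statement's English description precedes it below -/
import Mathlib

section
/- Let n ≥ 2 and let x_1, …, x_n be real numbers with at least two distinct values. Then the Yeo-Johnson negative log-likelihood λ ↦ NLL(λ) = (n/2)·log σ²_λ − (λ−1)·Σ_{i=1}^n sign(x_i)·log(|x_i|+1) + (n/2)·log(2π) is a strictly convex function of λ on ℝ. -/
open scoped BigOperators

/-- The Yeo-Johnson transformation. -/
noncomputable def yj (l x : ℝ) : ℝ :=
  if 0 ≤ x then
    if l ≠ 0 then ((x + 1) ^ l - 1) / l else Real.log (x + 1)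
  else
    if l ≠ 2 then -(((1 - x) ^ (2 - l) - 1) / (2 - l)) else -Real.log (1 - x)

/-!
With `s t = sign t * log (|t| + 1)` one has `yj l y = ∫ t in 0..y, exp ((l - 1) * s t)` for all `l`
and `y`. The empirical variance is an average of the squares `(yj l (x j) - yj l (x i)) ^ 2`, and
each such square is the double integral of `exp ((l - 1) * (s u + s v))` over the square with side
`[x i, x j]`. Hence, as a function of `l - 1`, the variance is up to a constant factor the
moment-generating function of `s u + s v` under a finite measure on the plane. Its logarithm is a
cumulant-generating function, whose second derivative is the variance of `s u + s v` under a tilted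
measure; this is positive because `s` is injective. The rest of the likelihood is affine in `l`.
-/

open MeasureTheory ProbabilityTheory Set

theorem strictConvexOn_cgf {Ω : Type*} {mΩ : MeasurableSpace Ω} {μ : Measure Ω} {X : Ω → ℝ}
    (hX : ∀ c, ¬ X =ᵐ[μ] fun _ ↦ c) :
    StrictConvexOn ℝ (interior (integrableExpSet X μ)) (cgf X μ) := by
  refine strictConvexOn_of_deriv2_pos' convex_integrableExpSet.interior
    analyticOnNhd_cgf.continuousOn fun t ht ↦ ?_
  rw [← iteratedDeriv_eq_iterate, ← variance_tilted_mul ht]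
  refine (variance_nonneg _ _).lt_of_ne' fun hvar ↦
    hX ((μ.tilted (t * X ·))[X]) ?_
  exact (absolutelyContinuous_tilted (interior_subset (s := integrableExpSet X μ) ht)).ae_eq
    (ae_eq_integral_of_variance_eq_zero (memLp_tilted_mul ht 2) hvar)

theorem mgf_fst_add_snd_prod {Ω Ω' : Type*} {mΩ : MeasurableSpace Ω} {mΩ' : MeasurableSpace Ω'}
    (μ : Measure Ω) (ν : Measure Ω') [SFinite μ] [SFinite ν] (X : Ω → ℝ) (Y : Ω' → ℝ) (t : ℝ) :
    mgf (fun ω ↦ X ω.1 + Y ω.2) (μ.prod ν) t = mgf X μ t * mgf Y ν t := by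
  simp only [mgf, mul_add, Real.exp_add]
  exact integral_prod_mul (fun ω ↦ Real.exp (t * X ω)) fun ω ↦ Real.exp (t * Y ω)

theorem not_add_ae_eq_const_of_injective {Ω : Type*} {mΩ : MeasurableSpace Ω} {μ : Measure Ω}
    [SFinite μ] [NullSingletonClass μ] [NeZero μ] {f : Ω → ℝ} (hf : f.Injective) (c : ℝ) :
    ¬ (fun q : Ω × Ω ↦ f q.1 + f q.2) =ᵐ[μ.prod μ] fun _ ↦ c := by
  intro hc
  obtain ⟨u, hu⟩ := (Measure.ae_ae_of_ae_prod hc).exists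
  obtain ⟨v, hv⟩ := hu.exists
  have hne : ∀ᵐ w ∂μ, w ≠ v := Measure.ae_ne μ v
  obtain ⟨w, hw, hwv⟩ := (hu.and hne).exists
  exact hwv (hf (by linarith))

section SquareMeasure

variable {ι : Type*} {f : ℝ → ℝ}

/-- The sum over all pairs `(i, j)` of the Lebesgue measure on the square with side `[x i, x j]`.
Under it, `f u + f v` has a moment-generating function equal to a sum of squared increments. Sides
are unoriented (`uIoc`), so each square is counted twice and the diagonal contributes zero. -/
noncomputable def squareMeasure (x : ι → ℝ) : Measure (ℝ × ℝ) :=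
  .sum fun p : ι × ι ↦
    (volume.restrict (uIoc (x p.1) (x p.2))).prod (volume.restrict (uIoc (x p.1) (x p.2)))

theorem integrable_exp_squareMeasure [Finite ι] (hf : Continuous f) (x : ι → ℝ) (t : ℝ) :
    Integrable (fun q : ℝ × ℝ ↦ Real.exp (t * (f q.1 + f q.2))) (squareMeasure x) := by
  have := Fintype.ofFinite ι
  rw [squareMeasure, Measure.sum_fintype, integrable_finsetSum_measure]
  intro p _
  have hint : IntegrableOn (fun u ↦ Real.exp (t * f u)) (uIoc (x p.1) (x p.2)) :=
    (Continuous.intervalIntegrable (by fun_prop) _ _).def'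
  simpa only [mul_add, Real.exp_add] using hint.mul_prod hint

theorem mgf_squareMeasure [Fintype ι] (hf : Continuous f) (x : ι → ℝ) (t : ℝ) :
    mgf (fun q : ℝ × ℝ ↦ f q.1 + f q.2) (squareMeasure x) t =
      ∑ p : ι × ι, (∫ u in x p.1..x p.2, Real.exp (t * f u)) ^ 2 := by
  rw [squareMeasure, mgf_sum_measure (integrable_exp_squareMeasure hf x t), tsum_fintype]
  refine Finset.sum_congr rfl fun p _ ↦ ?_
  rw [mgf_fst_add_snd_prod, ← sq, sq_eq_sq_iff_abs_eq_abs,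
    intervalIntegral.abs_integral_eq_abs_integral_uIoc, mgf]

theorem not_ae_eq_const_squareMeasure (hf : f.Injective) {x : ι → ℝ} (hx : ∃ i j, x i ≠ x j)
    (c : ℝ) : ¬ (fun q : ℝ × ℝ ↦ f q.1 + f q.2) =ᵐ[squareMeasure x] fun _ ↦ c := by
  obtain ⟨i, j, hij⟩ := hx
  have : NeZero (volume.restrict (uIoc (x i) (x j))) := by
    refine ⟨Measure.restrict_eq_zero.not.2 ?_⟩
    simpa [sub_eq_zero] using hij.symm
  intro hc
  exact not_add_ae_eq_const_of_injective hf c (ae_mono (Measure.le_sum _ (i, j)) hc)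

theorem strictConvexOn_log_sum_sq_integral_exp [Fintype ι] (hf : Continuous f)
    (hinj : f.Injective) {x : ι → ℝ} (hx : ∃ i j, x i ≠ x j) {c : ℝ} (hc : c ≠ 0) :
    StrictConvexOn ℝ univ fun t ↦
      Real.log (c * ∑ p : ι × ι, (∫ u in x p.1..x p.2, Real.exp (t * f u)) ^ 2) := by
  have hconst := not_ae_eq_const_squareMeasure hinj hx
  have huniv : integrableExpSet (fun q : ℝ × ℝ ↦ f q.1 + f q.2) (squareMeasure x) = univ :=
    eq_univ_of_forall (integrable_exp_squareMeasure hf x)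
  have hne : squareMeasure x ≠ 0 := fun h0 ↦ hconst 0 (by simp [h0, Filter.EventuallyEq])
  have hcgf := strictConvexOn_cgf hconst
  rw [huniv, interior_univ] at hcgf
  convert! hcgf.add_const (Real.log c) using 2 with t
  rw [← mgf_squareMeasure hf,
    Real.log_mul hc (mgf_pos' hne (integrable_exp_squareMeasure hf x t)).ne', add_comm]
  rfl

end SquareMeasure

/-- The odd function `s t = sign t * log (|t| + 1)` whose sum over the sample is the Jacobian term
of the likelihood; `exp ((l - 1) * s t)` is the derivative of the Yeo-Johnson transformation. -/
noncomputable def signedLog (t : ℝ) : ℝ := Real.sign t * Real.log (|t| + 1)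

theorem signedLog_neg (t : ℝ) : signedLog (-t) = -signedLog t := by
  simp [signedLog, Real.sign_neg]

theorem signedLog_of_nonneg {t : ℝ} (ht : 0 ≤ t) : signedLog t = Real.log (t + 1) := by
  rcases ht.eq_or_lt with rfl | ht
  · simp [signedLog]
  · rw [signedLog, Real.sign_of_pos ht, one_mul, abs_of_pos ht]

theorem strictMono_signedLog : StrictMono signedLog := by
  refine strictMono_of_odd_strictMonoOn_nonneg signedLog_neg fun u hu v hv huv ↦ ?_
  rw [mem_Ici] at hu hv
  rw [signedLog_of_nonneg hu, signedLog_of_nonneg hv]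
  exact Real.log_lt_log (by linarith) (by linarith)

theorem continuous_signedLog : Continuous signedLog := by
  have heq : signedLog = fun t ↦ if 0 ≤ t then Real.log (|t| + 1) else -Real.log (|t| + 1) := by
    ext t
    split_ifs with ht
    · rw [signedLog_of_nonneg ht, abs_of_nonneg ht]
    · rw [signedLog, Real.sign_of_neg (not_le.1 ht), neg_one_mul]
  have hlog : Continuous fun t : ℝ ↦ Real.log (|t| + 1) :=
    Continuous.log (by fun_prop) fun t ↦ by positivity
  rw [heq]
  exact hlog.if_le hlog.neg continuous_const continuous_id fun t ht ↦ by simp [← ht]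

theorem yj_neg (l x : ℝ) : yj l (-x) = -yj (2 - l) x := by
  have hl : 2 - l = 0 ↔ l = 2 := by rw [sub_eq_zero, eq_comm]
  rcases lt_trichotomy x 0 with hx | rfl | hx
  · simp only [yj, Left.nonneg_neg_iff, hx.le, hx.not_ge, if_true, if_false]
    split_ifs <;> simp_all [neg_add_eq_sub]
  · simp [yj]
  · simp only [yj, Left.nonneg_neg_iff, hx.le, hx.not_ge, if_true, if_false]
    split_ifs <;> simp_all [add_comm]

theorem integral_one_rpow_sub_one {y : ℝ} (hy : 0 < y) (l : ℝ) :
    ∫ t in (1 : ℝ)..y, t ^ (l - 1) = if l ≠ 0 then (y ^ l - 1) / l else Real.log y := by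
  split_ifs with hl
  · rw [integral_rpow (.inr ⟨by simpa using hl, notMem_uIcc_of_lt one_pos hy⟩)]
    simp
  · rw [not_not] at hl
    simp [hl, Real.rpow_neg_one, integral_inv_of_pos one_pos hy]

theorem yj_eq_integral_of_nonneg (l : ℝ) {x : ℝ} (hx : 0 ≤ x) :
    yj l x = ∫ t in (0 : ℝ)..x, Real.exp ((l - 1) * signedLog t) := by
  have hexp : EqOn (fun t ↦ Real.exp ((l - 1) * signedLog t)) (fun t ↦ (t + 1) ^ (l - 1))
      (uIcc 0 x) := by
    intro t ht
    rw [uIcc_of_le hx] at ht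
    have ht' : 0 < t + 1 := by linarith [ht.1]
    simp only [signedLog_of_nonneg ht.1, Real.rpow_def_of_pos ht', mul_comm]
  rw [intervalIntegral.integral_congr hexp,
    intervalIntegral.integral_comp_add_right (fun t ↦ t ^ (l - 1)), zero_add,
    integral_one_rpow_sub_one (by linarith), yj, if_pos hx]

theorem yj_eq_integral (l x : ℝ) :
    yj l x = ∫ t in (0 : ℝ)..x, Real.exp ((l - 1) * signedLog t) := by
  rcases le_total 0 x with hx | hx
  · exact yj_eq_integral_of_nonneg l hx
  · calc
      yj l x = -yj (2 - l) (-x) := by rw [← yj_neg, neg_neg]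
      _ = -∫ t in (0 : ℝ)..-x, Real.exp ((l - 1) * signedLog (-t)) := by
        rw [yj_eq_integral_of_nonneg _ (neg_nonneg.2 hx)]
        simp only [signedLog_neg]
        ring_nf
      _ = ∫ t in (0 : ℝ)..x, Real.exp ((l - 1) * signedLog t) := by
        rw [intervalIntegral.integral_comp_neg (fun t ↦ Real.exp ((l - 1) * signedLog t)),
          neg_neg, neg_zero, intervalIntegral.integral_symm, neg_neg]

theorem yj_sub_yj (l x y : ℝ) :
    yj l y - yj l x = ∫ t in x..y, Real.exp ((l - 1) * signedLog t) := by
  have hcont : Continuous fun t ↦ Real.exp ((l - 1) * signedLog t) := by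
    have := continuous_signedLog
    fun_prop
  rw [yj_eq_integral, yj_eq_integral, intervalIntegral.integral_interval_sub_left
    (hcont.intervalIntegrable _ _) (hcont.intervalIntegrable _ _)]

theorem average_sq_sub_average_eq_sum_sq_sub {ι : Type*} [Fintype ι] (f : ι → ℝ) :
    (1 / Fintype.card ι : ℝ) * ∑ i, (f i - (1 / Fintype.card ι : ℝ) * ∑ j, f j) ^ 2 =
      1 / (2 * Fintype.card ι ^ 2) * ∑ p : ι × ι, (f p.2 - f p.1) ^ 2 := by
  rcases isEmpty_or_nonempty ι with _ | _
  · simp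
  rw [Fintype.sum_prod_type]
  simp only [sub_sq, Finset.sum_add_distrib, Finset.sum_sub_distrib, ← Finset.mul_sum,
    ← Finset.sum_mul, Finset.sum_const, Finset.card_univ, nsmul_eq_mul]
  field_simp
  ring

theorem strictConvexOn_log_variance_yj {ι : Type*} [Fintype ι] {x : ι → ℝ}
    (hx : ∃ i j, x i ≠ x j) :
    StrictConvexOn ℝ univ fun l ↦ Real.log ((1 / Fintype.card ι : ℝ) *
      ∑ i, (yj l (x i) - (1 / Fintype.card ι : ℝ) * ∑ j, yj l (x j)) ^ 2) := by
  have : Nonempty ι := ⟨hx.choose⟩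
  have hlog := strictConvexOn_log_sum_sq_integral_exp continuous_signedLog
    strictMono_signedLog.injective hx (c := 1 / (2 * Fintype.card ι ^ 2)) (by positivity)
  simpa only [average_sq_sub_average_eq_sum_sq_sub, yj_sub_yj, Function.comp_def, preimage_univ,
    ← sub_eq_add_neg] using hlog.translate_left (-1)

/-- The Yeo-Johnson negative log-likelihood is strictly convex. -/
theorem yj_nll_strictConvexOn (n : ℕ) (hn : 2 ≤ n) (x : Fin n → ℝ)
    (hdist : ∃ i j, x i ≠ x j) :
    StrictConvexOn ℝ Set.univ (fun l : ℝ =>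
      (n / 2 : ℝ) *
          Real.log ((1 / n : ℝ) * ∑ i, (yj l (x i) - (1 / n : ℝ) * ∑ j, yj l (x j)) ^ 2)
        - (l - 1) * ∑ i, Real.sign (x i) * Real.log (|x i| + 1)
        + (n / 2 : ℝ) * Real.log (2 * Real.pi)) := by
  have hn_pos : (0 : ℝ) < n / 2 := by positivity
  refine ⟨convex_univ, fun l _ m _ hlm a b ha hb hab ↦ ?_⟩
  have hvar := (strictConvexOn_log_variance_yj hdist).2 (mem_univ l) (mem_univ m) hlm ha hb hab
  have hscaled := mul_lt_mul_of_pos_left hvar hn_pos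
  obtain rfl : b = 1 - a := by linarith
  simp only [smul_eq_mul, Fintype.card_fin] at hscaled ⊢
  linear_combination hscaled
end

section
/- For every real number a ≥ 1 and every λ ∈ ℝ, the quantity D(a, λ) := a^{2λ} − a^λ·λ²·(log a)² − 2·a^λ + 1 is nonnegative. Moreover, if a > 1 and λ ≠ 0 then D(a, λ) > 0. -/
/-!
Completing the square, `D(a, λ) = (a^λ - 1)² - a^λ (λ log a)²`. With `x = λ log a / 2` we have
`a^λ - 1 = e^{2x} - 1 = 2 eˣ sinh x`, so `D(a, λ) = 4 a^λ (sinh² x - x²)`, and the sign of `D` is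
decided by the comparison of `|sinh x|` with `|x|`.
-/

open Real

theorem sq_lt_sinh_sq_iff {x : ℝ} : x ^ 2 < sinh x ^ 2 ↔ x ≠ 0 := by
  rw [sq_lt_sq, abs_sinh, self_lt_sinh_iff, abs_pos]

theorem sq_le_sinh_sq (x : ℝ) : x ^ 2 ≤ sinh x ^ 2 := by
  rw [sq_le_sq, abs_sinh, self_le_sinh_iff]
  exact abs_nonneg x

theorem exp_two_mul_sub_one (x : ℝ) : exp (2 * x) - 1 = 2 * exp x * sinh x := by
  have exp_mul_exp_neg : exp x * exp (-x) = 1 := by rw [← exp_add, add_neg_cancel, exp_zero]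
  rw [sinh_eq, two_mul, exp_add]
  linear_combination exp_mul_exp_neg

theorem rpow_sub_one_sq {a : ℝ} (ha : 0 < a) (l : ℝ) :
    (a ^ l - 1) ^ 2 = 4 * a ^ l * sinh (l * log a / 2) ^ 2 := by
  set x := l * log a / 2 with hx
  have rpow_eq_exp : a ^ l = exp (2 * x) := by
    rw [rpow_def_of_pos ha, hx, mul_div_cancel₀ _ two_ne_zero, mul_comm]
  calc (a ^ l - 1) ^ 2 = (2 * exp x * sinh x) ^ 2 := by rw [rpow_eq_exp, exp_two_mul_sub_one]
    _ = 4 * exp (2 * x) * sinh x ^ 2 := by rw [two_mul x, exp_add]; ring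
    _ = 4 * a ^ l * sinh x ^ 2 := by rw [rpow_eq_exp]

theorem yj_D_eq_sinh_sq_sub_sq {a : ℝ} (ha : 0 < a) (l : ℝ) :
    a ^ (2 * l) - a ^ l * l ^ 2 * log a ^ 2 - 2 * a ^ l + 1 =
      4 * a ^ l * (sinh (l * log a / 2) ^ 2 - (l * log a / 2) ^ 2) := by
  have rpow_two_mul : a ^ (2 * l) = a ^ l * a ^ l := by rw [two_mul, rpow_add ha]
  linear_combination rpow_two_mul + rpow_sub_one_sq ha l

theorem yj_D_nonneg_general {a : ℝ} (ha : 0 < a) (l : ℝ) :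
    0 ≤ a ^ (2 * l) - a ^ l * l ^ 2 * log a ^ 2 - 2 * a ^ l + 1 ∧
      (0 < a ^ (2 * l) - a ^ l * l ^ 2 * log a ^ 2 - 2 * a ^ l + 1 ↔ a ≠ 1 ∧ l ≠ 0) := by
  have factor_pos : 0 < 4 * a ^ l := by positivity
  have half_mul_log_ne_zero : l * log a / 2 ≠ 0 ↔ a ≠ 1 ∧ l ≠ 0 := by
    rw [div_ne_zero_iff, mul_ne_zero_iff, log_ne_zero]
    grind
  rw [yj_D_eq_sinh_sq_sub_sq ha, mul_nonneg_iff_of_pos_left factor_pos,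
    mul_pos_iff_of_pos_left factor_pos, sub_nonneg, sub_pos, sq_lt_sinh_sq_iff]
  exact ⟨sq_le_sinh_sq _, half_mul_log_ne_zero⟩

/-- For `a ≥ 1` the quantity `D(a, λ) = a^{2λ} − a^λ·λ²·(log a)² − 2·a^λ + 1` is
nonnegative, and it is positive whenever `a > 1` and `λ ≠ 0`. -/
theorem yj_D_nonneg (a : ℝ) (ha : 1 ≤ a) (l : ℝ) :
    0 ≤ a ^ (2 * l) - a ^ l * l ^ 2 * Real.log a ^ 2 - 2 * a ^ l + 1 ∧
      (1 < a → l ≠ 0 →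
        0 < a ^ (2 * l) - a ^ l * l ^ 2 * Real.log a ^ 2 - 2 * a ^ l + 1) := by
  obtain ⟨nonneg, pos_iff⟩ := yj_D_nonneg_general (zero_lt_one.trans_le ha) l
  exact ⟨nonneg, fun one_lt hl ↦ pos_iff.mpr ⟨one_lt.ne', hl⟩⟩
end

section
/- For every λ ∈ ℝ, the function x ↦ Ψ(λ, x) is differentiable on ℝ and its derivative at every x equals (|x| + 1)^{sign(x)·(λ−1)} = exp[(λ − 1)·sign(x)·log(|x| + 1)]. In particular this derivative is strictly positive everywhere. -/
/-- The Box-Cox transformation, the primitive of `t ↦ t ^ (l - 1)` on the positive reals that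
vanishes at `1`. Up to reflection and a unit shift, it is each of the two branches of `yj`. -/
noncomputable def boxCox (l x : ℝ) : ℝ :=
  if l ≠ 0 then (x ^ l - 1) / l else Real.log x

theorem boxCox_one (l : ℝ) : boxCox l 1 = 0 := by
  simp [boxCox]

theorem hasDerivAt_boxCox (l : ℝ) {x : ℝ} (hx : x ≠ 0) :
    HasDerivAt (boxCox l) (x ^ (l - 1)) x := by
  rcases eq_or_ne l 0 with rfl | hl
  · have hlog : boxCox 0 = Real.log := by ext; simp [boxCox]
    rw [hlog, zero_sub, Real.rpow_neg_one]
    exact Real.hasDerivAt_log hx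
  · have hpow : boxCox l = fun y => (y ^ l - 1) / l := by ext; simp [boxCox, hl]
    rw [hpow, ← mul_div_cancel_left₀ (x ^ (l - 1)) hl]
    exact ((Real.hasDerivAt_rpow_const (.inl hx)).sub_const 1).div_const l

section YeoJohnson

variable (l : ℝ) {x : ℝ}

theorem yj_of_nonneg (hx : 0 ≤ x) : yj l x = boxCox l (x + 1) := by
  simp only [yj, boxCox, if_pos hx]

theorem yj_of_nonpos (hx : x ≤ 0) : yj l x = -boxCox (2 - l) (1 - x) := by
  rcases hx.lt_or_eq with hneg | rfl
  · simp only [yj, boxCox, if_neg hneg.not_ge, sub_ne_zero, ne_comm (a := l)]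
    split_ifs <;> rfl
  · rw [yj_of_nonneg l le_rfl, zero_add, sub_zero, boxCox_one, boxCox_one, neg_zero]

theorem hasDerivWithinAt_yj_Ici (hx : 0 ≤ x) :
    HasDerivWithinAt (yj l) ((x + 1) ^ (l - 1)) (Set.Ici 0) x := by
  have hshift : HasDerivAt (fun y => boxCox l (y + 1)) ((x + 1) ^ (l - 1)) x :=
    (hasDerivAt_boxCox l (by positivity)).comp_add_const x 1
  exact hshift.hasDerivWithinAt.congr (fun _ hy => yj_of_nonneg l hy) (yj_of_nonneg l hx)

theorem hasDerivWithinAt_yj_Iic (hx : x ≤ 0) :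
    HasDerivWithinAt (yj l) ((1 - x) ^ (1 - l)) (Set.Iic 0) x := by
  have hreflect : HasDerivAt (fun y => -boxCox (2 - l) (1 - y)) ((1 - x) ^ (1 - l)) x := by
    have hbase : 1 - x ≠ 0 := by linarith
    have hexp : 2 - l - 1 = 1 - l := by ring
    simpa only [neg_neg, hexp] using ((hasDerivAt_boxCox (2 - l) hbase).comp_const_sub 1 x).fun_neg
  exact hreflect.hasDerivWithinAt.congr (fun _ hy => yj_of_nonpos l hy) (yj_of_nonpos l hx)

theorem hasDerivAt_yj_zero : HasDerivAt (yj l) 1 0 := by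
  have hleft : HasDerivWithinAt (yj l) 1 (Set.Iic 0) 0 := by
    simpa only [sub_zero, Real.one_rpow] using hasDerivWithinAt_yj_Iic l le_rfl
  have hright : HasDerivWithinAt (yj l) 1 (Set.Ici 0) 0 := by
    simpa only [zero_add, Real.one_rpow] using hasDerivWithinAt_yj_Ici l le_rfl
  simpa only [Set.Iic_union_Ici, hasDerivWithinAt_univ] using hleft.union hright

theorem hasDerivAt_yj (x : ℝ) :
    HasDerivAt (yj l) ((|x| + 1) ^ (Real.sign x * (l - 1))) x := by
  rcases lt_trichotomy x 0 with hneg | rfl | hpos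
  · have hbase : |x| + 1 = 1 - x := by rw [abs_of_neg hneg]; ring
    have hexp : Real.sign x * (l - 1) = 1 - l := by rw [Real.sign_of_neg hneg]; ring
    rw [hbase, hexp]
    exact (hasDerivWithinAt_yj_Iic l hneg.le).hasDerivAt (Iic_mem_nhds hneg)
  · simpa only [Real.sign_zero, zero_mul, Real.rpow_zero] using hasDerivAt_yj_zero l
  · rw [abs_of_pos hpos, Real.sign_of_pos hpos, one_mul]
    exact (hasDerivWithinAt_yj_Ici l hpos.le).hasDerivAt (Ici_mem_nhds hpos)

end YeoJohnson

/-- For every `λ`, the map `x ↦ Ψ(λ, x)` is differentiable with derivative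
`(|x| + 1)^{sign(x)·(λ−1)} = exp((λ−1)·sign(x)·log(|x|+1)) > 0` at every `x`. -/
theorem yj_hasDerivAt_x (l x : ℝ) :
    HasDerivAt (fun y => yj l y) ((|x| + 1) ^ (Real.sign x * (l - 1))) x ∧
      (|x| + 1) ^ (Real.sign x * (l - 1)) =
        Real.exp ((l - 1) * Real.sign x * Real.log (|x| + 1)) ∧
      0 < (|x| + 1) ^ (Real.sign x * (l - 1)) := by
  have hbase : 0 < |x| + 1 := by positivity
  refine ⟨hasDerivAt_yj l x, ?_, Real.rpow_pos_of_pos hbase _⟩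
  rw [Real.rpow_def_of_pos hbase, mul_comm, mul_comm (Real.sign x)]
end

section
/- Fix x ≥ 0 and an integer k ≥ 1. Writing ∂_λ^k Ψ(λ, x) for the k-th derivative of λ ↦ Ψ(λ, x) (with ∂_λ^0 Ψ = Ψ), one has for every λ ≠ 0 the recursion ∂_λ^k Ψ(λ, x) = [(x+1)^λ·(log(x+1))^k − k·∂_λ^{k−1}Ψ(λ, x)]/λ, and at λ = 0 one has ∂_λ^k Ψ(0, x) = (log(x+1))^{k+1}/(k+1). In particular, λ ↦ Ψ(λ, x) is infinitely differentiable on ℝ. -/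
/-!
For `x ≥ 0`, `λ ↦ Ψ(λ, x)` is the difference quotient at `0` of the analytic function
`λ ↦ (x + 1) ^ λ`, completed by the derivative at `0`; removing the singularity keeps it analytic.
Differentiating `λ * Ψ(λ, x) = (x + 1) ^ λ - 1` repeatedly by the Leibniz rule, where `λ` has only
one nonzero derivative, gives for every `λ`, including `0`,
`λ * ∂^(n+1) Ψ + (n + 1) * ∂^n Ψ = (x + 1) ^ λ * log (x + 1) ^ (n + 1)`.
The recursion is this identity at `n = k - 1`, and the value at `0` is this identity at `n = k`.
-/

section dslope

variable {𝕜 E : Type*} [NontriviallyNormedField 𝕜] [NormedAddCommGroup E] [NormedSpace 𝕜 E]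
  {f g : 𝕜 → E} {a b : 𝕜} {n : ℕ}

theorem analyticAt_dslope (ha : AnalyticAt 𝕜 f a) (hb : AnalyticAt 𝕜 f b) :
    AnalyticAt 𝕜 (dslope f a) b := by
  rcases eq_or_ne b a with rfl | hne
  · obtain ⟨p, hp⟩ := ha
    exact hp.has_fpower_series_dslope_fslope.analyticAt
  · have hslope : AnalyticAt 𝕜 (slope f a) b :=
      ((analyticAt_id.sub analyticAt_const).inv (sub_ne_zero.2 hne)).smul (hb.sub analyticAt_const)
    exact hslope.congr (dslope_eventuallyEq_slope_of_ne f hne).symm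

theorem iteratedDeriv_succ_sub_smul (hg : ContDiffAt 𝕜 (n + 1 : ℕ) g b) :
    iteratedDeriv (n + 1) (fun t => (t - a) • g t) b =
      (b - a) • iteratedDeriv (n + 1) g b + ((n : 𝕜) + 1) • iteratedDeriv n g b := by
  have hvanish (i : ℕ) : iteratedDeriv (i + 2) (fun t => t - a) b = 0 := by
    simp [iteratedDeriv_succ', iteratedDeriv_const]
  have hleibniz :=
    iteratedDerivWithin_smul (Set.mem_univ b) uniqueDiffOn_univ
      (f := fun t => t - a) (by fun_prop) hg.contDiffWithinAt
  simp only [iteratedDerivWithin_univ] at hleibniz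
  refine hleibniz.trans ?_
  rw [Finset.sum_range_succ', Finset.sum_range_succ', Finset.sum_eq_zero]
  · simp [← Nat.cast_smul_eq_nsmul 𝕜, add_comm]
  · simp [hvanish]

theorem iteratedDeriv_succ_eq_smul_dslope_add (hf : ContDiffAt 𝕜 (n + 1 : ℕ) (dslope f a) b) :
    iteratedDeriv (n + 1) f b =
      (b - a) • iteratedDeriv (n + 1) (dslope f a) b +
        ((n : 𝕜) + 1) • iteratedDeriv n (dslope f a) b := by
  have hf_eq : f = fun t => f a + (t - a) • dslope f a t := by
    funext t
    rw [sub_smul_dslope, add_sub_cancel]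
  rw [← iteratedDeriv_succ_sub_smul hf]
  conv_lhs => rw [hf_eq, iteratedDeriv_const_add n.succ_pos]

end dslope

theorem analyticAt_const_rpow {c : ℝ} (hc : 0 < c) (t : ℝ) :
    AnalyticAt ℝ (fun s : ℝ => c ^ s) t := by
  simp only [Real.rpow_def_of_pos hc]
  fun_prop

theorem iteratedDeriv_const_rpow {c : ℝ} (hc : 0 < c) (n : ℕ) :
    iteratedDeriv n (fun t : ℝ => c ^ t) = fun t => c ^ t * Real.log c ^ n := by
  simp only [Real.rpow_def_of_pos hc, iteratedDeriv_exp_const_mul, mul_comm (Real.log c ^ n)]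

section yj

variable {x : ℝ}

theorem yj_eq_dslope_const_rpow (hx : 0 ≤ x) :
    (fun t => yj t x) = dslope (fun t : ℝ => (x + 1) ^ t) 0 := by
  have hx1 : 0 < x + 1 := by linarith
  funext t
  rcases eq_or_ne t 0 with rfl | ht
  · simp [yj, hx, dslope_same, deriv_const_rpow_id hx1]
  · simp [yj, hx, ht, dslope_of_ne, slope_def_field]

theorem analyticAt_yj (hx : 0 ≤ x) (l : ℝ) : AnalyticAt ℝ (fun t => yj t x) l := by
  have hx1 : 0 < x + 1 := by linarith
  rw [yj_eq_dslope_const_rpow hx]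
  exact analyticAt_dslope (analyticAt_const_rpow hx1 0) (analyticAt_const_rpow hx1 l)

theorem contDiff_yj (hx : 0 ≤ x) {n : WithTop ℕ∞} : ContDiff ℝ n fun t => yj t x :=
  contDiff_iff_contDiffAt.2 fun l => (analyticAt_yj hx l).contDiffAt

theorem mul_iteratedDeriv_succ_yj_add (hx : 0 ≤ x) (n : ℕ) (l : ℝ) :
    l * iteratedDeriv (n + 1) (fun t => yj t x) l + (n + 1) * iteratedDeriv n (fun t => yj t x) l =
      (x + 1) ^ l * Real.log (x + 1) ^ (n + 1) := by
  have hsmooth := (contDiff_yj hx (n := (n + 1 : ℕ))).contDiffAt (x := l)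
  rw [yj_eq_dslope_const_rpow hx] at hsmooth ⊢
  have hleibniz := iteratedDeriv_succ_eq_smul_dslope_add hsmooth
  rw [iteratedDeriv_const_rpow (by linarith)] at hleibniz
  simpa only [sub_zero, smul_eq_mul] using hleibniz.symm

end yj

/-- For `x ≥ 0` and `k ≥ 1`, the iterated derivatives of `λ ↦ Ψ(λ, x)` satisfy the
stated recursion for `λ ≠ 0`, equal `(log(x+1))^{k+1}/(k+1)` at `λ = 0`, and
`λ ↦ Ψ(λ, x)` is infinitely differentiable. -/
theorem yj_iteratedDeriv_lambda (x : ℝ) (hx : 0 ≤ x) (k : ℕ) (hk : 1 ≤ k) :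
    (∀ l : ℝ, l ≠ 0 →
        iteratedDeriv k (fun t => yj t x) l =
          ((x + 1) ^ l * Real.log (x + 1) ^ k
              - k * iteratedDeriv (k - 1) (fun t => yj t x) l) / l) ∧
      iteratedDeriv k (fun t => yj t x) 0 = Real.log (x + 1) ^ (k + 1) / (k + 1) ∧
      ContDiff ℝ (⊤ : ℕ∞) fun t => yj t x := by
  refine ⟨fun l hl => ?_, ?_, contDiff_yj hx⟩
  · obtain ⟨n, rfl⟩ := Nat.exists_eq_add_of_le' hk
    have hrec := mul_iteratedDeriv_succ_yj_add hx n l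
    rw [eq_div_iff hl, Nat.add_sub_cancel, Nat.cast_succ]
    linarith
  · have hrec := mul_iteratedDeriv_succ_yj_add hx k 0
    rw [zero_mul, zero_add, Real.rpow_zero, one_mul] at hrec
    rw [eq_div_iff (by positivity), mul_comm, hrec]
end

section
/- Let f : ℝ → ℝ be differentiable and strictly convex with a global minimizer λ_*. Consider the exponential-search iteration with state (λ_t, λ_t⁻, λ_t⁺) ∈ ℝ × (ℝ ∪ {−∞}) × (ℝ ∪ {+∞}) started from λ_0 = 0, λ_0⁻ = −∞, λ_0⁺ = +∞ and updated by the ExpUpdate rule driven by Δ_t ∈ {−1, +1}: if Δ_t = 1 then λ_t⁻ ← λ_{t−1} and λ_t ← (λ_{t−1}⁺ + λ_{t−1})/2 if λ_{t−1}⁺ < ∞, else λ_t ← max(2λ_{t−1}, 1); if Δ_t = −1 then λ_t⁺ ← λ_{t−1} and λ_t ← (λ_{t−1}⁻ + λ_{t−1})/2 if λ_{t−1}⁻ > −∞, else λ_t ← min(2λ_{t−1}, −1). Suppose the first sequence is driven by Δ_t = −sign(f′(λ_{t−1})) and the second sequence (λ′_t, λ′_t⁻, λ′_t⁺) is driven from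 the same initial state by Δ′_t = 1 if λ′_{t−1} < λ_* and Δ′_t = −1 otherwise. Then, provided λ_{t−1} ≠ λ_* for all steps t up to a horizon t_max, the two sequences of states and of signs coincide: (λ_t, λ_t⁻, λ_t⁺, Δ_t) = (λ′_t, λ′_t⁻, λ′_t⁺, Δ′_t) for all 1 ≤ t ≤ t_max. In particular, all intermediate signs Δ_t revealed by the iteration are a deterministic function of λ_* alone. -/
/-- The `ExpUpdate` rule of exponential search. The state is `(λ, λ⁻, λ⁺)`, where the
lower bound `λ⁻` lives in `ℝ ∪ {−∞}` and the upper bound `λ⁺` lives in `ℝ ∪ {+∞}`. -/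
noncomputable def expUpdate (s : ℝ × WithBot ℝ × WithTop ℝ) (Δ : ℝ) :
    ℝ × WithBot ℝ × WithTop ℝ :=
  if Δ = 1 then
    ((if h : s.2.2 = ⊤ then max (2 * s.1) 1 else (s.2.2.untop h + s.1) / 2),
      (s.1 : WithBot ℝ), s.2.2)
  else
    ((if h : s.2.1 = ⊥ then min (2 * s.1) (-1) else (s.2.1.unbot h + s.1) / 2),
      s.2.1, (s.1 : WithTop ℝ))

/-! The slope of a convex function from `x` to `m` bounds the derivative at `x` from above if
`x < m`, and from below if `m < x`. So wherever `f m < f x`, the sign of `f′(x)` only says on which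
side of `m` the point `x` lies. The recursion driven by `-sign f′` is therefore the iteration of a
map that depends on `m` but not on `f`, and this is the second recursion, whatever the update rule
is. -/

section ConvexDerivSign

variable {S : Set ℝ} {f : ℝ → ℝ} {x m : ℝ}

theorem deriv_neg_of_convexOn_of_lt_right (hf : ConvexOn ℝ S f) (hx : x ∈ S) (hm : m ∈ S)
    (hfx : DifferentiableAt ℝ f x) (hxm : x < m) (hlt : f m < f x) : deriv f x < 0 :=
  calc
    deriv f x ≤ slope f x m := hf.deriv_le_slope hx hm hxm hfx
    _ < 0 := (slope_neg_iff_of_le hxm.le).mpr hlt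

theorem deriv_pos_of_convexOn_of_lt_left (hf : ConvexOn ℝ S f) (hx : x ∈ S) (hm : m ∈ S)
    (hfx : DifferentiableAt ℝ f x) (hmx : m < x) (hlt : f m < f x) : 0 < deriv f x :=
  calc
    0 < slope f m x := (slope_pos_iff_of_le hmx.le).mpr hlt
    _ ≤ deriv f x := hf.slope_le_deriv hm hx hmx hfx

theorem neg_sign_deriv_of_convexOn_of_lt (hf : ConvexOn ℝ S f) (hx : x ∈ S) (hm : m ∈ S)
    (hfx : DifferentiableAt ℝ f x) (hlt : f m < f x) :
    -Real.sign (deriv f x) = if x < m then 1 else -1 := by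
  have hne : x ≠ m := fun h => hlt.ne (congrArg f h.symm)
  rcases hne.lt_or_gt with hxm | hmx
  · rw [Real.sign_of_neg (deriv_neg_of_convexOn_of_lt_right hf hx hm hfx hxm hlt), if_pos hxm,
      neg_neg]
  · rw [Real.sign_of_pos (deriv_pos_of_convexOn_of_lt_left hf hx hm hfx hmx hlt),
      if_neg hmx.not_gt]

end ConvexDerivSign

theorem lt_of_strictConvexOn_of_isMinOn_of_ne {𝕜 E β : Type*} [Field 𝕜] [LinearOrder 𝕜]
    [IsStrictOrderedRing 𝕜] [AddCommMonoid β] [PartialOrder β] [IsOrderedAddMonoid β]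
    [AddCommMonoid E] [SMul 𝕜 E] [Module 𝕜 β] [PosSMulMono 𝕜 β] {S : Set E} {f : E → β}
    {m x : E} (hf : StrictConvexOn 𝕜 S f) (hmin : IsMinOn f S m) (hm : m ∈ S) (hx : x ∈ S)
    (hne : x ≠ m) : f m < f x := by
  refine (hmin hx).lt_of_ne fun heq => hne ?_
  have hxmin : IsMinOn f S x := fun y hy => heq.symm.trans_le (hmin hy)
  exact hf.eq_of_isMinOn hxmin hmin hx hm

theorem eq_iterate_of_recurrence {σ : Type*} {F : σ → σ} {n : ℕ} {s : ℕ → σ}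
    (hs : ∀ t < n, s (t + 1) = F (s t)) : ∀ t ≤ n, s t = F^[t] (s 0) := by
  intro t
  induction t with
  | zero => exact fun _ => rfl
  | succ t ih =>
    intro ht
    rw [hs t ht, ih (Nat.le_of_succ_le ht), Function.iterate_succ_apply']

theorem expSearch_signs_determined_by_minimizer_general {σ : Type*} {step : σ → ℝ → σ}
    {pos : σ → ℝ} {S : Set ℝ} {f : ℝ → ℝ} (hf : ConvexOn ℝ S f) {m : ℝ} (hm : m ∈ S) {n : ℕ}
    {s s' : ℕ → σ} {Δ Δ' : ℕ → ℝ} (h0 : s 0 = s' 0)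
    (hΔ : ∀ t, 1 ≤ t → t ≤ n → Δ t = -Real.sign (deriv f (pos (s (t - 1)))))
    (hs : ∀ t, 1 ≤ t → t ≤ n → s t = step (s (t - 1)) (Δ t))
    (hΔ' : ∀ t, 1 ≤ t → t ≤ n → Δ' t = if pos (s' (t - 1)) < m then 1 else -1)
    (hs' : ∀ t, 1 ≤ t → t ≤ n → s' t = step (s' (t - 1)) (Δ' t))
    (hmem : ∀ t < n, pos (s t) ∈ S) (hdiff : ∀ t < n, DifferentiableAt ℝ f (pos (s t)))
    (hlt : ∀ t < n, f m < f (pos (s t))) :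
    ∀ t, 1 ≤ t → t ≤ n → s t = s' t ∧ Δ t = Δ' t := by
  let side : σ → ℝ := fun x => if pos x < m then 1 else -1
  have hside : ∀ t < n, Δ (t + 1) = side (s t) := fun t ht =>
    (hΔ (t + 1) t.succ_pos ht).trans <|
      neg_sign_deriv_of_convexOn_of_lt hf (hmem t ht) hm (hdiff t ht) (hlt t ht)
  have hside' : ∀ t < n, Δ' (t + 1) = side (s' t) := fun t ht => hΔ' (t + 1) t.succ_pos ht
  have hs_iter : ∀ t ≤ n, s t = (fun x => step x (side x))^[t] (s 0) :=
    eq_iterate_of_recurrence fun t ht =>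
      (hs (t + 1) t.succ_pos ht).trans (congrArg (step (s t)) (hside t ht))
  have hs'_iter : ∀ t ≤ n, s' t = (fun x => step x (side x))^[t] (s' 0) :=
    eq_iterate_of_recurrence fun t ht =>
      (hs' (t + 1) t.succ_pos ht).trans (congrArg (step (s' t)) (hside' t ht))
  have hstate : ∀ t ≤ n, s t = s' t := fun t ht => by
    rw [hs_iter t ht, hs'_iter t ht, h0]
  rintro (_ | t) h1 ht
  · exact absurd h1 (Nat.not_succ_le_zero 0)
  · exact ⟨hstate (t + 1) ht, by rw [hside t ht, hside' t ht, hstate t (Nat.le_of_succ_le ht)]⟩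

/-- For a differentiable strictly convex `f` with global minimizer `λ_*`, the
exponential-search iteration driven by `Δ_t = −sign(f′(λ_{t−1}))` coincides with the
iteration driven from the same initial state by `Δ′_t = 1` if `λ′_{t−1} < λ_*` and
`Δ′_t = −1` otherwise, provided `λ_{t−1} ≠ λ_*` at every step up to the horizon
`t_max`. In particular, all intermediate signs revealed by the iteration are a
deterministic function of `λ_*` alone. -/
theorem expSearch_signs_determined_by_minimizer
    (f : ℝ → ℝ) (hf : Differentiable ℝ f) (hconv : StrictConvexOn ℝ Set.univ f)
    (lstar : ℝ) (hmin : ∀ l : ℝ, f lstar ≤ f l) (tmax : ℕ)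
    (s s' : ℕ → ℝ × WithBot ℝ × WithTop ℝ) (Δ Δ' : ℕ → ℝ)
    (hs0 : s 0 = (0, ⊥, ⊤)) (hs'0 : s' 0 = (0, ⊥, ⊤))
    (hΔ : ∀ t : ℕ, 1 ≤ t → t ≤ tmax → Δ t = -Real.sign (deriv f (s (t - 1)).1))
    (hs : ∀ t : ℕ, 1 ≤ t → t ≤ tmax → s t = expUpdate (s (t - 1)) (Δ t))
    (hΔ' : ∀ t : ℕ, 1 ≤ t → t ≤ tmax →
      Δ' t = if (s' (t - 1)).1 < lstar then 1 else -1)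
    (hs' : ∀ t : ℕ, 1 ≤ t → t ≤ tmax → s' t = expUpdate (s' (t - 1)) (Δ' t))
    (hne : ∀ t : ℕ, 1 ≤ t → t ≤ tmax → (s (t - 1)).1 ≠ lstar) :
    ∀ t : ℕ, 1 ≤ t → t ≤ tmax → s t = s' t ∧ Δ t = Δ' t :=
  expSearch_signs_determined_by_minimizer_general hconv.convexOn (Set.mem_univ lstar)
    (hs0.trans hs'0.symm) hΔ hs hΔ' hs' (fun _ _ => Set.mem_univ _) (fun _ _ => hf _)
    fun t ht => lt_of_strictConvexOn_of_isMinOn_of_ne hconv (fun l _ => hmin l)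
      (Set.mem_univ _) (Set.mem_univ _) (hne (t + 1) t.succ_pos ht)
end
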